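/- arXiv:1306.3838 — 2 statements merged into one kernel-verified Lean document; each statement's English description precedes it below -/
import Mathlib

section
/- Let A be a ring with local units, let G be a group, and let α be a partial action of G on A such that the partial skew group ring R = A ⋆_α G is associative. If J is a G-invariant ideal of A with J ≠ {0} and J ≠ A, then the set I = {r ∈ R : P_t(r) ∈ J for all t ∈ G} is a two-sided ideal of R with I ≠ {0} and I ≠ R. -/
/-- A partial action of a group `G` on a non-unital ring `A` by two-sided ideals
`D t` and ring isomorphisms `α t : D t⁻¹ → D t` (encoded as globally defined maps
whose behaviour only matters on the relevant ideal). -/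
structure RingPartialAction (G : Type*) [Group G] (A : Type*) [NonUnitalRing A] where
  /-- The ideals `D t`, given as additive subgroups … -/
  D : G → AddSubgroup A
  /-- … which are two-sided ideals. -/
  idl_left : ∀ t (a : A), ∀ x ∈ D t, a * x ∈ D t
  idl_right : ∀ t, ∀ x ∈ D t, ∀ a : A, x * a ∈ D t
  /-- The maps `α t`, only their values on `D t⁻¹` matter. -/
  α : G → A → A
  α_mem : ∀ t, ∀ a ∈ D t⁻¹, α t a ∈ D t
  α_add : ∀ t, ∀ a ∈ D t⁻¹, ∀ b ∈ D t⁻¹, α t (a + b) = α t a + α t b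
  α_mul : ∀ t, ∀ a ∈ D t⁻¹, ∀ b ∈ D t⁻¹, α t (a * b) = α t a * α t b
  D_one : D 1 = ⊤
  α_one : ∀ a, α 1 a = a
  α_left_inv : ∀ t, ∀ a ∈ D t⁻¹, α t⁻¹ (α t a) = a
  α_mapsTo : ∀ t s, ∀ a ∈ D t⁻¹, a ∈ D s → α t a ∈ D (t * s)
  α_surjOn : ∀ t s, ∀ b ∈ D t, b ∈ D (t * s) → ∃ a, a ∈ D t⁻¹ ∧ a ∈ D s ∧ α t a = b
  α_comp : ∀ t s, ∀ a ∈ D s⁻¹, a ∈ D (s⁻¹ * t⁻¹) → α t (α s a) = α (t * s) a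

namespace RingPartialAction

variable {G : Type*} [Group G] {A : Type*} [NonUnitalRing A]

/-- The underlying additive group of the partial skew group ring `A ⋆_α G`:
finitely supported dependent functions `r` with `r t ∈ D t`,
`r = Σ_t r(t) δ_t`. -/
abbrev SkewRing (pa : RingPartialAction G A) : Type _ := Π₀ t : G, ↥(pa.D t)

/-- The element `a δ_t`. -/
noncomputable def delta [DecidableEq G] (pa : RingPartialAction G A) (t : G) (a : A)
    (ha : a ∈ pa.D t) : pa.SkewRing := DFinsupp.single t ⟨a, ha⟩

/-- `P g r`, the `g`-th coordinate projection of `r`. -/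
def P (pa : RingPartialAction G A) (g : G) (r : pa.SkewRing) : A := ↑(r g)

/-- The support of `r = Σ_t r(t) δ_t`. -/
def supp (pa : RingPartialAction G A) (r : pa.SkewRing) : Set G := {t : G | r t ≠ 0}

/-- The element `e δ_0` for `e ∈ A = D 1`. -/
noncomputable def unitDelta [DecidableEq G] (pa : RingPartialAction G A) (e : A) :
    pa.SkewRing :=
  pa.delta 1 e (by rw [pa.D_one]; exact AddSubgroup.mem_top e)

end RingPartialAction

/-- The multiplication of the partial skew group ring `A ⋆_α G`, which is *assumed*
to exist, to be biadditive, to be associative and to satisfy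
`(a δ_t)(b δ_s) = α_t(α_{t⁻¹}(a) b) δ_{ts}`. -/
structure SkewMul {G : Type*} [Group G] {A : Type*} [NonUnitalRing A] [DecidableEq G]
    (pa : RingPartialAction G A) where
  mul : pa.SkewRing → pa.SkewRing → pa.SkewRing
  left_distrib : ∀ x y z, mul x (y + z) = mul x y + mul x z
  right_distrib : ∀ x y z, mul (x + y) z = mul x z + mul y z
  mul_single : ∀ (t s : G) (a : A) (ha : a ∈ pa.D t) (b : A) (hb : b ∈ pa.D s) (g : G),
    pa.P g (mul (pa.delta t a ha) (pa.delta s b hb)) =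
      if g = t * s then pa.α t (pa.α t⁻¹ a * b) else 0
  assoc : ∀ x y z, mul (mul x y) z = mul x (mul y z)

section LocalUnits

variable (A : Type*) [NonUnitalRing A]

/-- `A` is a ring with local units. -/
def HasLocalUnits : Prop :=
  ∀ F : Finset A, ∃ e : A, e * e = e ∧ ∀ a ∈ F, e * a = a ∧ a * e = a

variable {A}

/-- `E` is a set of local units for `A`. -/
def IsLocalUnitSet (E : Set A) : Prop :=
  (∀ e ∈ E, e * e = e) ∧ ∀ F : Finset A, ∃ e ∈ E, ∀ a ∈ F, e * a = a ∧ a * e = a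

/-- The (non-unital, non-necessarily full) subring `S ⊆ A` has local units. -/
def SubsetHasLocalUnits (S : Set A) : Prop :=
  ∀ F : Finset A, (∀ a ∈ F, a ∈ S) →
    ∃ e ∈ S, e * e = e ∧ ∀ a ∈ F, e * a = a ∧ a * e = a

/-- `I` is a two-sided ideal of `A` (as a set). -/
def IsRingIdeal (I : Set A) : Prop :=
  (0 : A) ∈ I ∧ (∀ a ∈ I, ∀ b ∈ I, a + b ∈ I) ∧ (∀ a ∈ I, -a ∈ I) ∧
    (∀ a ∈ I, ∀ b : A, a * b ∈ I ∧ b * a ∈ I)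

end LocalUnits

section Invariance

variable {G : Type*} [Group G] {A : Type*} [NonUnitalRing A]

/-- `I ⊆ A` is `G`-invariant: `α t (I ∩ D t⁻¹) ⊆ I ∩ D t`. -/
def GInvariant (pa : RingPartialAction G A) (I : Set A) : Prop :=
  ∀ t : G, ∀ a ∈ I, a ∈ pa.D t⁻¹ → pa.α t a ∈ I ∧ pa.α t a ∈ pa.D t

/-- `A` is `G`-simple: the only `G`-invariant ideals of `A` are `{0}` and `A`. -/
def GSimple (pa : RingPartialAction G A) : Prop :=
  ∀ I : Set A, IsRingIdeal I → GInvariant pa I → I = {0} ∨ I = Set.univ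

variable [DecidableEq G]

/-- `J` is a two-sided ideal of the partial skew group ring. -/
def IsSkewIdeal {pa : RingPartialAction G A} (S : SkewMul pa) (J : Set pa.SkewRing) : Prop :=
  (0 : pa.SkewRing) ∈ J ∧ (∀ x ∈ J, ∀ y ∈ J, x + y ∈ J) ∧ (∀ x ∈ J, -x ∈ J) ∧
    (∀ x ∈ J, ∀ y : pa.SkewRing, S.mul x y ∈ J ∧ S.mul y x ∈ J)

/-- The corner `x R x` of the partial skew group ring. -/
def corner {pa : RingPartialAction G A} (S : SkewMul pa) (x : pa.SkewRing) :
    Set pa.SkewRing := {y | ∃ z, y = S.mul x (S.mul z x)}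

/-- `C_e`: the center of the corner `eδ_0 R eδ_0`. -/
def Ce {pa : RingPartialAction G A} (S : SkewMul pa) (e : A) : Set pa.SkewRing :=
  {x ∈ corner S (pa.unitDelta e) |
    ∀ y ∈ corner S (pa.unitDelta e), S.mul x y = S.mul y x}

end Invariance

/-!
Since multiplication is biadditive, membership of `x * y` in `I` can be tested on products
`(x_t δ_t)(y_s δ_s) = α_t(α_{t⁻¹}(x_t) y_s) δ_{ts}`. If `x_t ∈ J`, then `α_{t⁻¹}(x_t) ∈ J` by
invariance; so as soon as one factor has its coordinates in `J`, the product
`α_{t⁻¹}(x_t) y_s` lies in `J`, and invariance under `α_t` concludes. Properness and nonvanishing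
hold because `J` is the preimage of `I` under the embedding `a ↦ a δ_1`.
-/

theorem map_dfinsupp_mem_of_forall_single {ι M S : Type*} [DecidableEq ι] {β : ι → Type*}
    [∀ i, AddCommMonoid (β i)] [AddCommMonoid M] [SetLike S M] [AddSubmonoidClass S M] (K : S)
    (f : (Π₀ i, β i) →+ M) (x : Π₀ i, β i) (h : ∀ i, f (DFinsupp.single i (x i)) ∈ K) :
    f x ∈ K := by
  classical
  rw [← DFinsupp.sum_single (f := x), map_dfinsuppSum]
  exact sum_mem fun i _ => h i

/-- The additive subgroup underlying a two-sided ideal given as a set. -/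
def IsRingIdeal.toAddSubgroup {A : Type*} [NonUnitalRing A] {J : Set A} (hJ : IsRingIdeal J) :
    AddSubgroup A where
  carrier := J
  zero_mem' := hJ.1
  add_mem' ha hb := hJ.2.1 _ ha _ hb
  neg_mem' ha := hJ.2.2.1 _ ha

namespace RingPartialAction

variable {G : Type*} [Group G] {A : Type*} [NonUnitalRing A]

/-- The elements of the partial skew group ring all of whose coordinates lie in `J`. This is the
set `I` attached to an ideal `J` of `A`, bundled as an additive subgroup and defined for any
additive subgroup `J`. -/
def coeffSubgroup (pa : RingPartialAction G A) (J : AddSubgroup A) : AddSubgroup pa.SkewRing where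
  carrier := {r | ∀ t, pa.P t r ∈ J}
  zero_mem' _ := J.zero_mem
  add_mem' hx hy t := J.add_mem (hx t) (hy t)
  neg_mem' hx t := J.neg_mem (hx t)

theorem α_inv_mem (pa : RingPartialAction G A) {t : G} {a : A} (ha : a ∈ pa.D t) :
    pa.α t⁻¹ a ∈ pa.D t⁻¹ :=
  pa.α_mem t⁻¹ a (by rwa [inv_inv])

theorem P_unitDelta [DecidableEq G] (pa : RingPartialAction G A) (g : G) (a : A) :
    pa.P g (pa.unitDelta a) = if g = 1 then a else 0 := by
  rcases eq_or_ne g 1 with rfl | hg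
  · simp [P, unitDelta, delta]
  · simp [P, unitDelta, delta, DFinsupp.single_eq_of_ne hg, hg]

theorem unitDelta_eq_zero_iff [DecidableEq G] (pa : RingPartialAction G A) {a : A} :
    pa.unitDelta a = 0 ↔ a = 0 := by
  simp [unitDelta, delta]

theorem unitDelta_mem_coeffSubgroup_iff [DecidableEq G] (pa : RingPartialAction G A)
    {J : AddSubgroup A} {a : A} :
    pa.unitDelta a ∈ pa.coeffSubgroup J ↔ a ∈ J := by
  refine ⟨fun h => by simpa [P_unitDelta] using h 1, fun ha t => ?_⟩
  rw [P_unitDelta]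
  split_ifs
  exacts [ha, J.zero_mem]

theorem coeffSubgroup_eq_bot_iff (pa : RingPartialAction G A) {J : AddSubgroup A} :
    pa.coeffSubgroup J = ⊥ ↔ J = ⊥ := by
  classical
  refine ⟨fun h => ?_, ?_⟩
  · ext a
    rw [← pa.unitDelta_mem_coeffSubgroup_iff, h, AddSubgroup.mem_bot, AddSubgroup.mem_bot,
      unitDelta_eq_zero_iff]
  · rintro rfl
    exact (AddSubgroup.eq_bot_iff_forall _).2 fun r hr => DFinsupp.ext fun t =>
      Subtype.ext (AddSubgroup.mem_bot.1 (hr t))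

theorem coeffSubgroup_eq_top_iff (pa : RingPartialAction G A) {J : AddSubgroup A} :
    pa.coeffSubgroup J = ⊤ ↔ J = ⊤ := by
  classical
  refine ⟨fun h => ?_, ?_⟩
  · ext a
    rw [← pa.unitDelta_mem_coeffSubgroup_iff, h, iff_true_right (AddSubgroup.mem_top a)]
    exact AddSubgroup.mem_top _
  · rintro rfl
    exact (AddSubgroup.eq_top_iff' _).2 fun r t => AddSubgroup.mem_top (pa.P t r)

end RingPartialAction

namespace SkewMul

variable {G : Type*} [Group G] [DecidableEq G] {A : Type*} [NonUnitalRing A]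
  {pa : RingPartialAction G A}

theorem mul_mem_of_forall_delta {σ : Type*} [SetLike σ pa.SkewRing]
    [AddSubmonoidClass σ pa.SkewRing] (S : SkewMul pa) (K : σ) {x y : pa.SkewRing}
    (h : ∀ t s, S.mul (pa.delta t (pa.P t x) (x t).2) (pa.delta s (pa.P s y) (y s).2) ∈ K) :
    S.mul x y ∈ K := by
  let mulRight (z : pa.SkewRing) : pa.SkewRing →+ pa.SkewRing :=
    AddMonoidHom.mk' (fun w => S.mul w z) fun v w => S.right_distrib v w z
  let mulLeft (z : pa.SkewRing) : pa.SkewRing →+ pa.SkewRing :=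
    AddMonoidHom.mk' (S.mul z) (S.left_distrib z)
  exact map_dfinsupp_mem_of_forall_single K (mulRight y) x fun t =>
    map_dfinsupp_mem_of_forall_single K (mulLeft _) y fun s => h t s

variable {J : AddSubgroup A}

theorem delta_mul_delta_mem_coeffSubgroup (S : SkewMul pa) (hinv : GInvariant pa (J : Set A))
    {t s : G} {a b : A} (ha : a ∈ pa.D t) (hb : b ∈ pa.D s) (hab : pa.α t⁻¹ a * b ∈ J) :
    S.mul (pa.delta t a ha) (pa.delta s b hb) ∈ pa.coeffSubgroup J := by
  intro g
  rw [S.mul_single]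
  split_ifs
  · exact (hinv t _ hab (pa.idl_right _ _ (pa.α_inv_mem ha) b)).1
  · exact J.zero_mem

theorem mul_mem_coeffSubgroup (S : SkewMul pa) (hinv : GInvariant pa (J : Set A))
    {x y : pa.SkewRing} (h : ∀ t s, pa.α t⁻¹ (pa.P t x) * pa.P s y ∈ J) :
    S.mul x y ∈ pa.coeffSubgroup J :=
  S.mul_mem_of_forall_delta (pa.coeffSubgroup J) fun t s =>
    S.delta_mul_delta_mem_coeffSubgroup hinv (x t).2 (y s).2 (h t s)

theorem isSkewIdeal_coeffSubgroup (S : SkewMul pa) (hJ : IsRingIdeal (J : Set A))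
    (hinv : GInvariant pa (J : Set A)) :
    IsSkewIdeal S (pa.coeffSubgroup J : Set pa.SkewRing) := by
  obtain ⟨-, -, -, hmul⟩ := hJ
  refine ⟨zero_mem _, fun _ hx _ hy => add_mem hx hy, fun _ hx => neg_mem hx, fun x hx y =>
    ⟨S.mul_mem_coeffSubgroup hinv fun t s => ?_, S.mul_mem_coeffSubgroup hinv fun t s => ?_⟩⟩
  · have hα : pa.α t⁻¹ (pa.P t x) ∈ J := (hinv t⁻¹ _ (hx t) (by rw [inv_inv]; exact (x t).2)).1
    exact (hmul _ hα _).1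
  · exact (hmul _ (hx s) _).2

end SkewMul

theorem skew_ideal_of_invariant_ideal_general
    {G : Type*} [Group G] [DecidableEq G] {A : Type*} [NonUnitalRing A]
    (pa : RingPartialAction G A) (S : SkewMul pa)
    (J : Set A) (hJ : IsRingIdeal J) (hJinv : GInvariant pa J)
    (hJ0 : J ≠ {0}) (hJA : J ≠ Set.univ) :
    IsSkewIdeal S {r : pa.SkewRing | ∀ t : G, pa.P t r ∈ J} ∧
      {r : pa.SkewRing | ∀ t : G, pa.P t r ∈ J} ≠ {0} ∧
      {r : pa.SkewRing | ∀ t : G, pa.P t r ∈ J} ≠ Set.univ := by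
  refine ⟨S.isSkewIdeal_coeffSubgroup (J := hJ.toAddSubgroup) hJ hJinv, fun h => ?_, fun h => ?_⟩
  · have hbot : hJ.toAddSubgroup = ⊥ := pa.coeffSubgroup_eq_bot_iff.1 (SetLike.coe_injective h)
    exact hJ0 (congrArg SetLike.coe hbot)
  · have htop : hJ.toAddSubgroup = ⊤ := pa.coeffSubgroup_eq_top_iff.1 (SetLike.coe_injective h)
    exact hJA (congrArg SetLike.coe htop)

theorem skew_ideal_of_invariant_ideal
    {G : Type*} [Group G] [DecidableEq G] {A : Type*} [NonUnitalRing A]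
    (pa : RingPartialAction G A) (S : SkewMul pa)
    (hA : HasLocalUnits A)
    (J : Set A) (hJ : IsRingIdeal J) (hJinv : GInvariant pa J)
    (hJ0 : J ≠ {0}) (hJA : J ≠ Set.univ) :
    IsSkewIdeal S {r : pa.SkewRing | ∀ t : G, pa.P t r ∈ J} ∧
      {r : pa.SkewRing | ∀ t : G, pa.P t r ∈ J} ≠ {0} ∧
      {r : pa.SkewRing | ∀ t : G, pa.P t r ∈ J} ≠ Set.univ :=
  skew_ideal_of_invariant_ideal_general pa S J hJ hJinv hJ0 hJA
end

section
/- Let θ = ({X_t}_{t∈G}, {h_t}_{t∈G}) be a partial action of an abelian group G on a set X, let K be a field, let α be the induced partial action of G on F₀(X), and let R = F₀(X) ⋆_α G. If R is simple (its only two-sided ideals are {0} and R), then θ is free. -/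
/-- A partial action `θ = ({X_t}, {h_t})` of a group `G` on a set `X`: subsets
`Xt t ⊆ X` and bijections `h t : Xt t⁻¹ → Xt t` (encoded as globally defined maps
whose values only matter on `Xt t⁻¹`). -/
structure SetPartialAction (G : Type*) [Group G] (X : Type*) where
  Xt : G → Set X
  h : G → X → X
  h_mem : ∀ t, ∀ x ∈ Xt t⁻¹, h t x ∈ Xt t
  Xt_one : Xt 1 = Set.univ
  h_one : ∀ x, h 1 x = x
  h_left_inv : ∀ t, ∀ x ∈ Xt t⁻¹, h t⁻¹ (h t x) = x
  h_image : ∀ t s, h t '' (Xt t⁻¹ ∩ Xt s) = Xt t ∩ Xt (t * s)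
  h_comp : ∀ t s, ∀ x ∈ Xt s⁻¹, x ∈ Xt (s⁻¹ * t⁻¹) → h t (h s x) = h (t * s) x

namespace SetPartialAction

variable {G : Type*} [Group G] {X : Type*}

/-- A subset `V ⊆ X` is `G`-invariant if `h t (V ∩ Xt t⁻¹) ⊆ V` for all `t`. -/
def Invariant (θ : SetPartialAction G X) (V : Set X) : Prop :=
  ∀ t : G, θ.h t '' (V ∩ θ.Xt t⁻¹) ⊆ V

/-- `θ` is minimal if `∅` and `X` are the only `G`-invariant subsets of `X`. -/
def Minimal (θ : SetPartialAction G X) : Prop :=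
  ∀ V : Set X, θ.Invariant V → V = ∅ ∨ V = Set.univ

/-- `θ` is free if `h t x = x` for some `x ∈ Xt t⁻¹` implies `t = 1`. -/
def Free (θ : SetPartialAction G X) : Prop :=
  ∀ t : G, ∀ x ∈ θ.Xt t⁻¹, θ.h t x = x → t = 1

end SetPartialAction
section F0

variable {G : Type*} [Group G] {X : Type*} {K : Type*} [Field K]

/-- `F₀(V)`: the finitely supported functions `X → K` vanishing off `V`,
as a subset of `F₀(X) = X →₀ K`. -/
def F0 (K : Type*) [Field K] {X : Type*} (V : Set X) : Set (X →₀ K) :=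
  {f : X →₀ K | ∀ x ∉ V, f x = 0}

/-- `I` is a (two-sided) ring ideal of `F₀(X)`. -/
def IsIdealF0 {X : Type*} (K : Type*) [Field K] (I : Set (X →₀ K)) : Prop :=
  (0 : X →₀ K) ∈ I ∧ (∀ f ∈ I, ∀ g ∈ I, f + g ∈ I) ∧ (∀ f ∈ I, -f ∈ I) ∧
    (∀ f ∈ I, ∀ g : X →₀ K, f * g ∈ I ∧ g * f ∈ I)

open Classical in
/-- The induced map `α t : F₀(X) → F₀(X)`, `α t f = f ∘ h t⁻¹` on `Xt t`,
extended by zero off `Xt t`. -/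
noncomputable def amap (θ : SetPartialAction G X) (K : Type*) [Field K] (t : G)
    (f : X →₀ K) : X →₀ K :=
  Finsupp.onFinset (f.support.image (θ.h t))
    (fun x => if x ∈ θ.Xt t then f (θ.h t⁻¹ x) else 0)
    (by
      intro x hx
      by_cases hxt : x ∈ θ.Xt t
      · simp only [hxt, if_true] at hx
        have hmem : θ.h t⁻¹ x ∈ f.support := Finsupp.mem_support_iff.mpr hx
        refine Finset.mem_image.mpr ⟨θ.h t⁻¹ x, hmem, ?_⟩
        have := θ.h_left_inv t⁻¹ x (by simpa using hxt)
        simpa using this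
      · simp [hxt] at hx)

/-- `I ⊆ F₀(X)` is `G`-invariant: `α t (I ∩ D t⁻¹) ⊆ I ∩ D t`. -/
def GInvariantF0 (θ : SetPartialAction G X) (K : Type*) [Field K]
    (I : Set (X →₀ K)) : Prop :=
  ∀ t : G, ∀ f ∈ I, f ∈ F0 K (θ.Xt t⁻¹) →
    amap θ K t f ∈ I ∧ amap θ K t f ∈ F0 K (θ.Xt t)

end F0
section FSkew

variable {G : Type*} [Group G] {X : Type*}

/-- The ideal `D t = F₀(X_t)` of `F₀(X)`, as an additive subgroup. -/
def Dsub (θ : SetPartialAction G X) (K : Type*) [Field K] (t : G) :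
    AddSubgroup (X →₀ K) where
  carrier := F0 K (θ.Xt t)
  zero_mem' := by intro x _; simp
  add_mem' := by intro f g hf hg x hx; simp [hf x hx, hg x hx]
  neg_mem' := by intro f hf x hx; simp [hf x hx]

variable (K : Type*) [Field K]

/-- The underlying additive group of the partial skew group ring `F₀(X) ⋆_α G`. -/
abbrev SkewF0 (θ : SetPartialAction G X) (K : Type*) [Field K] : Type _ :=
  Π₀ t : G, ↥(Dsub θ K t)

/-- The element `f δ_t` for `f ∈ D t`. -/
noncomputable def deltaF [DecidableEq G] (θ : SetPartialAction G X) (t : G)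
    (f : X →₀ K) (hf : f ∈ Dsub θ K t) : SkewF0 θ K :=
  DFinsupp.single t ⟨f, hf⟩

/-- The element `f δ_0` for arbitrary `f ∈ F₀(X) = D 1`. -/
noncomputable def deltaF0 [DecidableEq G] (θ : SetPartialAction G X) (f : X →₀ K) :
    SkewF0 θ K :=
  deltaF K θ 1 f (by intro x hx; rw [θ.Xt_one] at hx; exact absurd (Set.mem_univ x) hx)

/-- The characteristic function `χ_A ∈ F₀(X)` of a finite set `A ⊆ X`. -/
noncomputable def chi (A : Finset X) : X →₀ K := Finsupp.indicator A fun _ _ => (1 : K)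

/-- The multiplication of `F₀(X) ⋆_α G`, *assumed* to exist, to be biadditive,
associative and to satisfy `(f δ_t)(g δ_s) = α_t(α_{t⁻¹}(f) g) δ_{ts}`. -/
structure FSkewMul [DecidableEq G] (θ : SetPartialAction G X) (K : Type*) [Field K] where
  mul : SkewF0 θ K → SkewF0 θ K → SkewF0 θ K
  left_distrib : ∀ x y z, mul x (y + z) = mul x y + mul x z
  right_distrib : ∀ x y z, mul (x + y) z = mul x z + mul y z
  mul_single : ∀ (t s : G) (a : X →₀ K) (ha : a ∈ Dsub θ K t)
      (b : X →₀ K) (hb : b ∈ Dsub θ K s) (g : G),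
    ((mul (deltaF K θ t a ha) (deltaF K θ s b hb)) g : X →₀ K) =
      if g = t * s then amap θ K t (amap θ K t⁻¹ a * b) else 0
  assoc : ∀ x y z, mul (mul x y) z = mul x (mul y z)

variable [DecidableEq G] {θ : SetPartialAction G X}

/-- `J` is a two-sided ideal of the partial skew group ring `F₀(X) ⋆_α G`. -/
def IsSkewIdealF0 (S : FSkewMul θ K) (J : Set (SkewF0 θ K)) : Prop :=
  (0 : SkewF0 θ K) ∈ J ∧ (∀ x ∈ J, ∀ y ∈ J, x + y ∈ J) ∧ (∀ x ∈ J, -x ∈ J) ∧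
    (∀ x ∈ J, ∀ y : SkewF0 θ K, S.mul x y ∈ J ∧ S.mul y x ∈ J)

/-- The corner `x R x` of the partial skew group ring. -/
def cornerF (S : FSkewMul θ K) (x : SkewF0 θ K) : Set (SkewF0 θ K) :=
  {y | ∃ z, y = S.mul x (S.mul z x)}

/-- `C_e` for `e = χ_A`: the center of the corner `eδ_0 R eδ_0`. -/
def CeF (S : FSkewMul θ K) (A : Finset X) : Set (SkewF0 θ K) :=
  {x ∈ cornerF K S (deltaF0 K θ (chi K A)) |
    ∀ y ∈ cornerF K S (deltaF0 K θ (chi K A)), S.mul x y = S.mul y x}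

end FSkew

/-! The ring `F₀(X) ⋆_α G` acts on all functions `X → K`, with `a δ_t` acting as the weighted
composition operator `f ↦ a · (f ∘ h_{t⁻¹})`. If `h_t` fixes `x` and `t ≠ 1`, then `χ_{x} δ_1` and
`χ_{x} δ_t` are distinct elements acting in the same way, so the kernel of this representation is a
nonzero ideal. It is also proper, since `χ_{x} δ_1` acts nontrivially. -/

section PartialAction

variable {G : Type*} [Group G] {X : Type*} (θ : SetPartialAction G X)
variable {K : Type*} [Field K]

namespace SetPartialAction

theorem mem_Xt_one (x : X) : x ∈ θ.Xt 1 :=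
  θ.Xt_one ▸ Set.mem_univ x

theorem h_inv_mem {t : G} {x : X} (hx : x ∈ θ.Xt t) : θ.h t⁻¹ x ∈ θ.Xt t⁻¹ :=
  θ.h_mem t⁻¹ x (by rwa [inv_inv])

theorem h_h_inv {t : G} {x : X} (hx : x ∈ θ.Xt t) : θ.h t (θ.h t⁻¹ x) = x := by
  simpa only [inv_inv] using θ.h_left_inv t⁻¹ x (by rwa [inv_inv])

theorem mem_Xt_mul {t s : G} {x : X} (hx : x ∈ θ.Xt t) (hs : θ.h t⁻¹ x ∈ θ.Xt s) :
    x ∈ θ.Xt (t * s) :=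
  (θ.h_image t s ▸ ⟨_, ⟨θ.h_inv_mem hx, hs⟩, θ.h_h_inv hx⟩ : x ∈ θ.Xt t ∩ θ.Xt (t * s)).2

theorem h_inv_h_inv {t s : G} {x : X} (hx : x ∈ θ.Xt t) (hs : θ.h t⁻¹ x ∈ θ.Xt s) :
    θ.h s⁻¹ (θ.h t⁻¹ x) = θ.h (t * s)⁻¹ x := by
  rw [mul_inv_rev]
  apply θ.h_comp
  · rwa [inv_inv]
  · simpa only [inv_inv] using θ.mem_Xt_mul hx hs

end SetPartialAction

theorem single_mem_Dsub {t : G} {x : X} (hx : x ∈ θ.Xt t) (c : K) :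
    Finsupp.single x c ∈ Dsub θ K t :=
  fun _ hy => Finsupp.single_eq_of_ne fun h => hy (h ▸ hx)

theorem amap_amap_inv_mul_apply {t : G} {a : X →₀ K} (ha : a ∈ Dsub θ K t) (b : X →₀ K) (x : X) :
    amap θ K t (amap θ K t⁻¹ a * b) x = a x * b (θ.h t⁻¹ x) := by
  by_cases hx : x ∈ θ.Xt t
  · simp [amap, hx, θ.h_inv_mem hx, θ.h_h_inv hx]
  · simp [amap, hx, ha x hx]

theorem amap_amap_inv_mul_mem {t s : G} {a b : X →₀ K} (ha : a ∈ Dsub θ K t)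
    (hb : b ∈ Dsub θ K s) : amap θ K t (amap θ K t⁻¹ a * b) ∈ Dsub θ K (t * s) := by
  intro x hx
  rw [amap_amap_inv_mul_apply θ ha]
  by_cases hxt : x ∈ θ.Xt t
  · rw [hb _ fun hs => hx (θ.mem_Xt_mul hxt hs), mul_zero]
  · rw [ha x hxt, zero_mul]

end PartialAction

section SkewRing

variable {G : Type*} [Group G] [DecidableEq G] {X : Type*} {θ : SetPartialAction G X}
variable {K : Type*} [Field K]

namespace FSkewMul

protected theorem mul_zero (S : FSkewMul θ K) (x : SkewF0 θ K) : S.mul x 0 = 0 := by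
  simpa only [add_zero, left_eq_add] using S.left_distrib x 0 0

protected theorem zero_mul (S : FSkewMul θ K) (x : SkewF0 θ K) : S.mul 0 x = 0 := by
  simpa only [add_zero, left_eq_add] using S.right_distrib 0 0 x

theorem mul_deltaF (S : FSkewMul θ K) {t s : G} {a b : X →₀ K} (ha : a ∈ Dsub θ K t)
    (hb : b ∈ Dsub θ K s) :
    S.mul (deltaF K θ t a ha) (deltaF K θ s b hb) =
      deltaF K θ (t * s) (amap θ K t (amap θ K t⁻¹ a * b)) (amap_amap_inv_mul_mem θ ha hb) := by
  refine DFinsupp.ext fun g => Subtype.ext ?_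
  rw [S.mul_single]
  split_ifs with hg
  · subst hg
    rw [deltaF, DFinsupp.single_eq_same]
  · rw [deltaF, DFinsupp.single_eq_of_ne hg, ZeroMemClass.coe_zero]

theorem isSkewIdealF0_ker (S : FSkewMul θ K) {A : Type*} [NonUnitalNonAssocRing A]
    (φ : SkewF0 θ K →+ A) (hφ : ∀ x y, φ (S.mul x y) = φ x * φ y) :
    IsSkewIdealF0 K S φ.ker := by
  refine ⟨φ.ker.zero_mem, fun _ hx _ hy => φ.ker.add_mem hx hy, fun _ hx => φ.ker.neg_mem hx,
    fun x hx y => ?_⟩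
  have hφx : φ x = 0 := AddMonoidHom.mem_ker.mp hx
  simp only [SetLike.mem_coe, AddMonoidHom.mem_ker, hφ, hφx, zero_mul, mul_zero, and_self]

end FSkewMul

variable (θ K) in
/-- The representation of the partial skew group ring on the space of all functions `X → K`, in
which `a δ_t` acts by `f ↦ a · (f ∘ h_{t⁻¹})`. The values of `h_{t⁻¹}` off `X_t` are irrelevant
because `a` vanishes there. -/
noncomputable def functionRep : SkewF0 θ K →+ Module.End K (X → K) :=
  DFinsupp.liftAddHom fun t => AddMonoidHom.mk'
    (fun a => LinearMap.mulLeft K ⇑(a : X →₀ K) ∘ₗ LinearMap.funLeft K K (θ.h t⁻¹))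
    fun a b => by ext; simp [add_mul]

theorem functionRep_deltaF_apply {t : G} {a : X →₀ K} (ha : a ∈ Dsub θ K t) (f : X → K) (x : X) :
    functionRep θ K (deltaF K θ t a ha) f x = a x * f (θ.h t⁻¹ x) := by
  rw [functionRep, deltaF, DFinsupp.liftAddHom_apply_single]
  rfl

theorem functionRep_mul_deltaF (S : FSkewMul θ K) {t s : G} {a b : X →₀ K}
    (ha : a ∈ Dsub θ K t) (hb : b ∈ Dsub θ K s) :
    functionRep θ K (S.mul (deltaF K θ t a ha) (deltaF K θ s b hb)) =
      functionRep θ K (deltaF K θ t a ha) * functionRep θ K (deltaF K θ s b hb) := by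
  refine LinearMap.ext fun f => funext fun x => ?_
  rw [S.mul_deltaF, Module.End.mul_apply]
  simp only [functionRep_deltaF_apply, amap_amap_inv_mul_apply θ ha]
  by_cases hx : x ∈ θ.Xt t
  · by_cases hs : θ.h t⁻¹ x ∈ θ.Xt s
    · rw [θ.h_inv_h_inv hx hs, mul_assoc]
    · rw [hb _ hs, mul_zero, zero_mul, zero_mul, mul_zero]
  · rw [ha x hx, zero_mul, zero_mul, zero_mul]

theorem functionRep_deltaF_mul (S : FSkewMul θ K) {t : G} {a : X →₀ K} (ha : a ∈ Dsub θ K t)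
    (y : SkewF0 θ K) :
    functionRep θ K (S.mul (deltaF K θ t a ha) y) =
      functionRep θ K (deltaF K θ t a ha) * functionRep θ K y := by
  induction y using DFinsupp.induction with
  | h0 => rw [S.mul_zero, map_zero, mul_zero]
  | ha s b y _ _ ih =>
    rw [S.left_distrib, map_add, map_add, mul_add, ih]
    exact congrArg (· + _) (functionRep_mul_deltaF S ha b.2)

theorem functionRep_mul (S : FSkewMul θ K) (x y : SkewF0 θ K) :
    functionRep θ K (S.mul x y) = functionRep θ K x * functionRep θ K y := by
  induction x using DFinsupp.induction with
  | h0 => rw [S.zero_mul, map_zero, zero_mul]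
  | ha t a x _ _ ih =>
    rw [S.right_distrib, map_add, map_add, add_mul, ih]
    exact congrArg (· + _) (functionRep_deltaF_mul S a.2 y)

theorem functionRep_deltaF_single_congr {t s : G} {x : X} (ht : x ∈ θ.Xt t) (hs : x ∈ θ.Xt s)
    (hts : θ.h t⁻¹ x = θ.h s⁻¹ x) (c : K) :
    functionRep θ K (deltaF K θ t (Finsupp.single x c) (single_mem_Dsub θ ht c)) =
      functionRep θ K (deltaF K θ s (Finsupp.single x c) (single_mem_Dsub θ hs c)) := by
  refine LinearMap.ext fun f => funext fun y => ?_
  simp only [functionRep_deltaF_apply]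
  obtain rfl | hy := eq_or_ne y x
  · rw [hts]
  · rw [Finsupp.single_eq_of_ne hy, zero_mul, zero_mul]

theorem free_of_functionRep_injective (hinj : Function.Injective (functionRep θ K)) :
    θ.Free := by
  intro t x hx hfix
  have hxt : x ∈ θ.Xt t := hfix ▸ θ.h_mem t x hx
  have hfix_inv : θ.h t⁻¹ x = θ.h 1⁻¹ x := by
    rw [inv_one, θ.h_one]
    exact (congrArg (θ.h t⁻¹) hfix).symm.trans (θ.h_left_inv t x hx)
  have hdelta := hinj (functionRep_deltaF_single_congr hxt (θ.mem_Xt_one x) hfix_inv (1 : K))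
  obtain ⟨ht, -⟩ | ⟨hzero, -⟩ := (DFinsupp.single_eq_single_iff _ _ _ _).mp hdelta
  · exact ht
  · exact absurd (congrArg Subtype.val hzero) (Finsupp.single_ne_zero.mpr one_ne_zero)

theorem functionRep_ne_zero [Nonempty X] : functionRep θ K ≠ 0 := by
  obtain ⟨x⟩ := ‹Nonempty X›
  intro hzero
  have hone := functionRep_deltaF_apply (single_mem_Dsub θ (θ.mem_Xt_one x) (1 : K)) 1 x
  rw [hzero, Finsupp.single_eq_same, Pi.one_apply, one_mul] at hone
  exact zero_ne_one hone

end SkewRing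

theorem free_of_simple_general
    {G : Type*} [Group G] [DecidableEq G] {X : Type*}
    (θ : SetPartialAction G X)
    (K : Type*) [Field K] (S : FSkewMul θ K)
    (hsimple : ∀ J : Set (SkewF0 θ K), IsSkewIdealF0 K S J → J = {0} ∨ J = Set.univ) :
    θ.Free := by
  obtain hker | hker := hsimple _ (S.isSkewIdealF0_ker (functionRep θ K) (functionRep_mul S))
  · exact free_of_functionRep_injective <|
      (AddMonoidHom.ker_eq_bot_iff _).mp (SetLike.coe_injective hker)
  · have hzero : functionRep θ K = 0 :=
      AddMonoidHom.ext fun r => AddMonoidHom.mem_ker.mp (hker.ge (Set.mem_univ r))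
    intro _ x
    have : Nonempty X := ⟨x⟩
    exact absurd hzero functionRep_ne_zero

theorem free_of_simple
    {G : Type*} [CommGroup G] [DecidableEq G] {X : Type*}
    (θ : SetPartialAction G X)
    (K : Type*) [Field K] (S : FSkewMul θ K)
    (hsimple : ∀ J : Set (SkewF0 θ K), IsSkewIdealF0 K S J → J = {0} ∨ J = Set.univ) :
    θ.Free :=
  free_of_simple_general θ K S hsimple
end
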